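/- Let M, D₂, LC̄₃, LD₄, LD₅, L be real N×N (resp. appropriately sized) matrices, h > 0, P, Q real symmetric N×N matrices with P positive definite, Q positive semidefinite and MᵀP + PM = −Q. Define c₃ = λ_min(Q), c₄ = ‖2PLC̄₃‖, c₅ = ‖2PD₂‖ + ‖PLD₅‖, c₆ = ‖2PD₂‖ + ‖2PLD₄‖, c₇ = ‖PLD₅‖, let c₈ > 0, and c₉ = c₃ − c₄c₈ − (c₅ + c₆c₈ + c₇c₈)/h. Let Γ₂, Γ₃ : ℝ → ℝ^N be continuous, and let e : ℝ → ℝ^N be differentiable with, for all t ≥ 0, e'(t) = M·e(t) + (1/h)·D₂·(e(t) − e(t−h)) + LC̄₃·e(t−h) + (1/h)·LD₄·e(t−h) − (1/(2h))·LD₅·(e(t) + e(t−2h)) − Γ₂(t) − L·Γ₃(t). If at a time t ≥ 0 one has ‖e(t−h)‖ ≤ c₈‖e(t)‖ and ‖e(t−2h)‖ ≤ c₈‖e(t)‖, then V(t) := e(t)ᵀPe(t) satisfies V'(t) ≤ −c₉·‖e(t)‖² + 2‖P‖·( ‖Γ₂(t)‖ + ‖L‖·‖Γ₃(t)‖ )·‖e(t)‖.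 -/

import Mathlib

open Matrix

/-- The operator norm of a square real matrix induced by the Euclidean norm. -/
noncomputable def l2OpNorm {N : ℕ} (M : Matrix (Fin N) (Fin N) ℝ) : ℝ :=
  ‖Matrix.toEuclideanCLM (𝕜 := ℝ) M‖

/-!
Since `P` is symmetric, `V' = 2⟪e, P e'⟫`, and the Lyapunov equation makes the delay-free part `M e`
contribute `-⟪e, Q e⟫ ≤ -λ_min(Q)‖e‖²`. Each remaining term of the dynamics is linear in a present
or delayed error, which under the Razumikhin bounds has norm at most `‖e‖` or `c₈‖e‖`, so
Cauchy–Schwarz turns it into an operator norm times `‖e‖²`; summing these losses gives `c₉`. The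
remainders `Γ₂` and `LΓ₃` do not scale with the error and leave a term linear in `‖e‖`.
-/

open scoped RealInnerProductSpace

section Rayleigh

open scoped MatrixOrder

variable {n 𝕜 : Type*} [Fintype n] [DecidableEq n] [RCLike 𝕜]

lemma iInf_eigenvalues_mul_norm_sq_le_re_inner {A : Matrix n n 𝕜} (hA : A.IsHermitian)
    (x : EuclideanSpace 𝕜 n) :
    (⨅ i, hA.eigenvalues i) * ‖x‖ ^ 2 ≤ RCLike.re (inner 𝕜 x (toEuclideanCLM (𝕜 := 𝕜) A x)) := by
  have hle : algebraMap ℝ (Matrix n n 𝕜) (⨅ i, hA.eigenvalues i) ≤ A := by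
    refine algebraMap_le_of_le_spectrum (fun μ hμ => ?_) hA
    obtain ⟨i, rfl⟩ := hA.spectrum_real_eq_range_eigenvalues ▸ hμ
    exact ciInf_le (Set.finite_range _).bddBelow i
  have hsub : toEuclideanCLM (𝕜 := 𝕜) (A - algebraMap ℝ _ (⨅ i, hA.eigenvalues i)) x =
      toEuclideanCLM (𝕜 := 𝕜) A x - ((⨅ i, hA.eigenvalues i : ℝ) : 𝕜) • x := by
    rw [Algebra.algebraMap_eq_smul_one, RCLike.real_smul_eq_coe_smul (K := 𝕜), map_sub, map_smul,
      map_one]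
    rfl
  have hpos : 0 ≤ RCLike.re (inner 𝕜 x
      (toEuclideanCLM (𝕜 := 𝕜) (A - algebraMap ℝ _ (⨅ i, hA.eigenvalues i)) x)) :=
    (isPositive_toEuclideanLin_iff.mpr (le_iff.mp hle)).re_inner_nonneg_right x
  rw [hsub, inner_sub_right, map_sub, inner_smul_right, RCLike.re_ofReal_mul,
    inner_self_eq_norm_sq] at hpos
  exact sub_nonneg.mp hpos

end Rayleigh

section Definitions

variable {E : Type*} [SeminormedAddCommGroup E] [NormedSpace ℝ E]

/-- The right-hand side of the unperturbed delayed observer error dynamics with delay `h`, where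
`x`, `y` and `z` stand for `e(t)`, `e(t - h)` and `e(t - 2h)`. -/
noncomputable def delayedErrorField (h : ℝ) (M D₂ LC₃ LD₄ LD₅ : E →L[ℝ] E) (x y z : E) : E :=
  M x + (1 / h) • D₂ (x - y) + LC₃ y + (1 / h) • LD₄ y - (1 / (2 * h)) • LD₅ (x + z)

/-- The dissipation rate `c₉` of the Lyapunov function `⟪e, P e⟫`, where `c₃` is the decay rate of
the delay-free part and `c₈` the Razumikhin constant bounding the delayed errors. -/
noncomputable def dissipationRate (h : ℝ) (P D₂ LC₃ LD₄ LD₅ : E →L[ℝ] E) (c₃ c₈ : ℝ) : ℝ :=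
  c₃ - ‖(2 : ℝ) • (P * LC₃)‖ * c₈
    - ((‖(2 : ℝ) • (P * D₂)‖ + ‖P * LD₅‖)
      + (‖(2 : ℝ) • (P * D₂)‖ + ‖(2 : ℝ) • (P * LD₄)‖) * c₈ + ‖P * LD₅‖ * c₈) / h

end Definitions

section InnerProductSpace

variable {E F : Type*} [NormedAddCommGroup E] [InnerProductSpace ℝ E]
  [SeminormedAddCommGroup F] [NormedSpace ℝ F]

lemma abs_real_inner_apply_le (A : F →L[ℝ] E) (x : E) (w : F) :
    |⟪x, A w⟫| ≤ ‖A‖ * ‖w‖ * ‖x‖ :=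
  calc |⟪x, A w⟫| ≤ ‖x‖ * ‖A w‖ := abs_real_inner_le_norm x (A w)
    _ ≤ ‖x‖ * (‖A‖ * ‖w‖) := by gcongr; exact A.le_opNorm w
    _ = ‖A‖ * ‖w‖ * ‖x‖ := by ring

lemma abs_real_inner_apply_le_of_norm_le (A : F →L[ℝ] E) {x : E} {w : F} {c : ℝ}
    (hw : ‖w‖ ≤ c * ‖x‖) : |⟪x, A w⟫| ≤ ‖A‖ * c * ‖x‖ ^ 2 :=
  calc |⟪x, A w⟫| ≤ ‖A‖ * ‖w‖ * ‖x‖ := abs_real_inner_apply_le A x w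
    _ ≤ ‖A‖ * (c * ‖x‖) * ‖x‖ := by gcongr
    _ = ‖A‖ * c * ‖x‖ ^ 2 := by ring

lemma abs_real_inner_apply_add_apply_le (P : E →L[ℝ] E) (L : F →L[ℝ] E) (x γ₂ : E) (γ₃ : F) :
    |⟪x, P (γ₂ + L γ₃)⟫| ≤ ‖P‖ * (‖γ₂‖ + ‖L‖ * ‖γ₃‖) * ‖x‖ :=
  calc |⟪x, P (γ₂ + L γ₃)⟫| ≤ ‖P‖ * ‖γ₂ + L γ₃‖ * ‖x‖ := abs_real_inner_apply_le P x _
    _ ≤ ‖P‖ * (‖γ₂‖ + ‖L‖ * ‖γ₃‖) * ‖x‖ := by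
      gcongr
      exact norm_add_le_of_le le_rfl (L.le_opNorm γ₃)

lemma hasDerivAt_inner_apply_self {P : E →L[ℝ] E} (hP : (P : E →ₗ[ℝ] E).IsSymmetric)
    {e : ℝ → E} {e' : E} {t : ℝ} (he : HasDerivAt e e' t) :
    HasDerivAt (fun s => ⟪e s, P (e s)⟫) (2 * ⟪e t, P e'⟫) t := by
  have hsymm : ⟪e', P (e t)⟫ = ⟪e t, P e'⟫ := by
    rw [real_inner_comm]
    exact hP (e t) e'
  rw [two_mul]
  nth_rewrite 2 [← hsymm]
  exact he.inner ℝ (P.hasFDerivAt.comp_hasDerivAt t he)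

lemma two_mul_inner_apply_apply_eq_neg_of_lyapunov [CompleteSpace E] {M P Q : E →L[ℝ] E}
    (hLyap : star M * P + P * M = -Q) (hP : (P : E →ₗ[ℝ] E).IsSymmetric) (x : E) :
    2 * ⟪x, P (M x)⟫ = -⟪x, Q x⟫ := by
  have hstar : ⟪x, star M (P x)⟫ = ⟪x, P (M x)⟫ := by
    rw [ContinuousLinearMap.star_eq_adjoint, ContinuousLinearMap.adjoint_inner_right,
      real_inner_comm]
    exact hP x (M x)
  have hquad : ⟪x, star M (P x)⟫ + ⟪x, P (M x)⟫ = -⟪x, Q x⟫ := by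
    rw [← inner_add_right, ← inner_neg_right]
    exact congrArg (fun A : E →L[ℝ] E => ⟪x, A x⟫) hLyap
  rw [two_mul, ← hquad, hstar]

lemma two_mul_inner_apply_delayedErrorField (h : ℝ) (M P D₂ LC₃ LD₄ LD₅ : E →L[ℝ] E)
    (x y z : E) :
    2 * ⟪x, P (delayedErrorField h M D₂ LC₃ LD₄ LD₅ x y z)⟫ =
      2 * ⟪x, P (M x)⟫ + ⟪x, ((2 : ℝ) • (P * LC₃)) y⟫
        + (⟪x, ((2 : ℝ) • (P * D₂)) x⟫ - ⟪x, ((2 : ℝ) • (P * D₂)) y⟫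
          + ⟪x, ((2 : ℝ) • (P * LD₄)) y⟫ - ⟪x, (P * LD₅) x⟫ - ⟪x, (P * LD₅) z⟫) / h := by
  simp only [delayedErrorField, map_add, map_sub, map_smul, inner_add_right, inner_sub_right,
    real_inner_smul_right, smul_add, smul_sub, _root_.smul_apply, mul_apply_eq_comp]
  ring

lemma two_mul_inner_apply_delayedErrorField_le {h : ℝ} (hh : 0 < h)
    {M P D₂ LC₃ LD₄ LD₅ : E →L[ℝ] E} {c₃ c₈ : ℝ} {x y z : E}
    (hM : 2 * ⟪x, P (M x)⟫ ≤ -c₃ * ‖x‖ ^ 2) (hy : ‖y‖ ≤ c₈ * ‖x‖) (hz : ‖z‖ ≤ c₈ * ‖x‖) :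
    2 * ⟪x, P (delayedErrorField h M D₂ LC₃ LD₄ LD₅ x y z)⟫ ≤
      -dissipationRate h P D₂ LC₃ LD₄ LD₅ c₃ c₈ * ‖x‖ ^ 2 := by
  have hx : ‖x‖ ≤ 1 * ‖x‖ := (one_mul _).ge
  have hLC₃ := le_of_abs_le (abs_real_inner_apply_le_of_norm_le ((2 : ℝ) • (P * LC₃)) hy)
  have hD₂x := le_of_abs_le (abs_real_inner_apply_le_of_norm_le ((2 : ℝ) • (P * D₂)) hx)
  have hD₂y := neg_le_of_abs_le (abs_real_inner_apply_le_of_norm_le ((2 : ℝ) • (P * D₂)) hy)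
  have hLD₄ := le_of_abs_le (abs_real_inner_apply_le_of_norm_le ((2 : ℝ) • (P * LD₄)) hy)
  have hLD₅x := neg_le_of_abs_le (abs_real_inner_apply_le_of_norm_le (P * LD₅) hx)
  have hLD₅z := neg_le_of_abs_le (abs_real_inner_apply_le_of_norm_le (P * LD₅) hz)
  rw [two_mul_inner_apply_delayedErrorField]
  calc
    _ ≤ -c₃ * ‖x‖ ^ 2 + ‖(2 : ℝ) • (P * LC₃)‖ * c₈ * ‖x‖ ^ 2
        + ((‖(2 : ℝ) • (P * D₂)‖ + ‖P * LD₅‖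
          + (‖(2 : ℝ) • (P * D₂)‖ + ‖(2 : ℝ) • (P * LD₄)‖) * c₈ + ‖P * LD₅‖ * c₈)
            * ‖x‖ ^ 2) / h := by
      gcongr
      linarith
    _ = -dissipationRate h P D₂ LC₃ LD₄ LD₅ c₃ c₈ * ‖x‖ ^ 2 := by
      unfold dissipationRate
      ring

theorem lyapunov_dissipation_perturbed_general {h : ℝ} (hh : 0 < h)
    {M D₂ LC₃ LD₄ LD₅ P : E →L[ℝ] E} {L : F →L[ℝ] E} (hP : (P : E →ₗ[ℝ] E).IsSymmetric)
    {c₃ c₈ t : ℝ} {e : ℝ → E} {γ₂ : E} {γ₃ : F}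
    (hM : 2 * ⟪e t, P (M (e t))⟫ ≤ -c₃ * ‖e t‖ ^ 2)
    (he : HasDerivAt e
      (delayedErrorField h M D₂ LC₃ LD₄ LD₅ (e t) (e (t - h)) (e (t - 2 * h)) - γ₂ - L γ₃) t)
    (hrh : ‖e (t - h)‖ ≤ c₈ * ‖e t‖) (hr2h : ‖e (t - 2 * h)‖ ≤ c₈ * ‖e t‖) :
    deriv (fun s => ⟪e s, P (e s)⟫) t
      ≤ -dissipationRate h P D₂ LC₃ LD₄ LD₅ c₃ c₈ * ‖e t‖ ^ 2
        + 2 * ‖P‖ * (‖γ₂‖ + ‖L‖ * ‖γ₃‖) * ‖e t‖ := by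
  have hfield := two_mul_inner_apply_delayedErrorField_le (D₂ := D₂) (LC₃ := LC₃) (LD₄ := LD₄)
    (LD₅ := LD₅) hh hM hrh hr2h
  have hpert := neg_le_of_abs_le (abs_real_inner_apply_add_apply_le P L (e t) γ₂ γ₃)
  rw [(hasDerivAt_inner_apply_self hP he).deriv, sub_sub, map_sub, inner_sub_right]
  linarith

end InnerProductSpace

lemma two_mul_inner_toEuclideanCLM_le_of_lyapunov {n : Type*} [Fintype n] [DecidableEq n]
    {M P Q : Matrix n n ℝ} (hLyap : Mᵀ * P + P * M = -Q) (hP : P.IsHermitian)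
    (hQ : Q.IsHermitian) (x : EuclideanSpace ℝ n) :
    2 * ⟪x, toEuclideanCLM (𝕜 := ℝ) P (toEuclideanCLM (𝕜 := ℝ) M x)⟫ ≤
      -(⨅ i, hQ.eigenvalues i) * ‖x‖ ^ 2 := by
  have hLyapCLM : star (toEuclideanCLM (𝕜 := ℝ) M) * toEuclideanCLM (𝕜 := ℝ) P
      + toEuclideanCLM (𝕜 := ℝ) P * toEuclideanCLM (𝕜 := ℝ) M = -toEuclideanCLM (𝕜 := ℝ) Q := by
    rw [← map_star, ← map_mul, ← map_mul, ← map_add, ← map_neg, star_eq_conjTranspose,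
      conjTranspose_eq_transpose_of_trivial, hLyap]
  rw [two_mul_inner_apply_apply_eq_neg_of_lyapunov hLyapCLM (isSymmetric_toEuclideanLin_iff.mpr hP),
    neg_mul]
  exact neg_le_neg (iInf_eigenvalues_mul_norm_sq_le_re_inner hQ x)

/-- Dissipation inequality for the Lyapunov function along the perturbed delayed observer
error dynamics, under the Razumikhin bounds at time `t`. -/
theorem lyapunov_dissipation_perturbed
    (N : ℕ) (hN : 0 < N) (h : ℝ) (hh : 0 < h)
    (M D2 LC3 LD4 LD5 L P Q : Matrix (Fin N) (Fin N) ℝ)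
    (hPsymm : P.IsSymm) (hQsymm : Q.IsSymm)
    (hP : P.PosDef) (hQ : Q.PosSemidef)
    (hLyap : Mᵀ * P + P * M = -Q)
    (c₃ c₄ c₅ c₆ c₇ c₈ c₉ : ℝ)
    (hc₃ : c₃ = ⨅ i, hQ.1.eigenvalues i)
    (hc₄ : c₄ = l2OpNorm ((2 : ℝ) • (P * LC3)))
    (hc₅ : c₅ = l2OpNorm ((2 : ℝ) • (P * D2)) + l2OpNorm (P * LD5))
    (hc₆ : c₆ = l2OpNorm ((2 : ℝ) • (P * D2)) + l2OpNorm ((2 : ℝ) • (P * LD4)))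
    (hc₇ : c₇ = l2OpNorm (P * LD5))
    (hc₈ : 0 < c₈)
    (hc₉ : c₉ = c₃ - c₄ * c₈ - (c₅ + c₆ * c₈ + c₇ * c₈) / h)
    (Γ₂ Γ₃ : ℝ → EuclideanSpace ℝ (Fin N)) (hΓ₂ : Continuous Γ₂) (hΓ₃ : Continuous Γ₃)
    (e : ℝ → EuclideanSpace ℝ (Fin N)) (he : Differentiable ℝ e)
    (hode : ∀ t : ℝ, 0 ≤ t →
      deriv e t = Matrix.toEuclideanLin M (e t)
        + (1 / h) • Matrix.toEuclideanLin D2 (e t - e (t - h))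
        + Matrix.toEuclideanLin LC3 (e (t - h))
        + (1 / h) • Matrix.toEuclideanLin LD4 (e (t - h))
        - (1 / (2 * h)) • Matrix.toEuclideanLin LD5 (e t + e (t - 2 * h))
        - Γ₂ t - Matrix.toEuclideanLin L (Γ₃ t))
    (t : ℝ) (ht : 0 ≤ t)
    (hrh : ‖e (t - h)‖ ≤ c₈ * ‖e t‖) (hr2h : ‖e (t - 2 * h)‖ ≤ c₈ * ‖e t‖) :
    deriv (fun s => e s ⬝ᵥ (P *ᵥ e s)) t
      ≤ -c₉ * ‖e t‖ ^ 2
        + 2 * l2OpNorm P * (‖Γ₂ t‖ + l2OpNorm L * ‖Γ₃ t‖) * ‖e t‖ := by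
  let T := toEuclideanCLM (n := Fin N) (𝕜 := ℝ)
  have hdecay : 2 * ⟪e t, T P (T M (e t))⟫ ≤ -c₃ * ‖e t‖ ^ 2 :=
    hc₃ ▸ two_mul_inner_toEuclideanCLM_le_of_lyapunov hLyap hP.1 hQ.1 (e t)
  have hderiv : HasDerivAt e (delayedErrorField h (T M) (T D2) (T LC3) (T LD4) (T LD5)
      (e t) (e (t - h)) (e (t - 2 * h)) - Γ₂ t - T L (Γ₃ t)) t :=
    (he t).hasDerivAt.congr_deriv (hode t ht)
  have hrate : c₉ = dissipationRate h (T P) (T D2) (T LC3) (T LD4) (T LD5) c₃ c₈ := by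
    simp only [hc₉, hc₄, hc₅, hc₆, hc₇, dissipationRate, l2OpNorm, T, map_mul, map_smul]
  simp only [← inner_toEuclideanCLM, hrate]
  exact lyapunov_dissipation_perturbed_general hh (isSymmetric_toEuclideanLin_iff.mpr hP.1) hdecay
    hderiv hrh hr2h
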